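/- Fix real numbers λ₁,λ₂,λ₃,λ₄, pairwise distinct, with λᵢ+λⱼ > 0 for all i ≠ j, and let F : ℝ⁶ → ℝ⁶ be the SO(4) free rigid body vector field. If a point (x₁,x₂,x₃,y₁,y₂,y₃) ≠ 0 satisfies F(x,y) = 0 and C₂(x,y) = x₁y₁+x₂y₂+x₃y₃ = 0, then the point lies in t₁ ∪ t₂ ∪ t₃, i.e. all coordinates vanish except possibly one pair (xᵢ, yᵢ). In other words, on a regular adjoint orbit with c₂ = 0, the only equilibria are the twelve points of the three Weyl group orbits in the coordinate type Cartan subalgebras. -/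

import Mathlib

/-!
Put `u₁ = x₁/(λ₂+λ₃)`, `u₂ = x₂/(λ₁+λ₃)`, `u₃ = x₃/(λ₁+λ₂)` and `vᵢ = yᵢ/(λᵢ+λ₄)`. Since the `λᵢ`
are distinct, `F = 0` becomes `uᵢuⱼ = vᵢvⱼ` and `uᵢvⱼ = uⱼvᵢ` for `i ≠ j`
(`cancel_inv_sub`), while `C₂ = 0` becomes `∑ cᵢuᵢvᵢ = 0` with positive weights `cᵢ`. Multiplying
the latter by `uⱼvⱼ` turns it into `∑ cᵢ(uᵢvⱼ)² = 0`, so all products `uᵢvⱼ` vanish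
(`mul_eq_zero_of_weighted`); then `(uᵢuⱼ)² = uᵢuⱼvᵢvⱼ = 0` as well. Hence at most one of the six
coordinates is nonzero.
-/

/-- The SO(4) free rigid body vector field on `ℝ⁶`, in coordinates
`(x₁,x₂,x₃,y₁,y₂,y₃) = (p 0, p 1, p 2, p 3, p 4, p 5)`. -/
noncomputable def rbF (l1 l2 l3 l4 : ℝ) (p : Fin 6 → ℝ) : Fin 6 → ℝ :=
  ![(1/(l1+l2) - 1/(l1+l3)) * (p 1 * p 2) + (1/(l3+l4) - 1/(l2+l4)) * (p 4 * p 5),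
    (1/(l2+l3) - 1/(l1+l2)) * (p 0 * p 2) + (1/(l1+l4) - 1/(l3+l4)) * (p 3 * p 5),
    (1/(l1+l3) - 1/(l2+l3)) * (p 0 * p 1) + (1/(l2+l4) - 1/(l1+l4)) * (p 3 * p 4),
    (1/(l3+l4) - 1/(l1+l3)) * (p 1 * p 5) + (1/(l1+l2) - 1/(l2+l4)) * (p 2 * p 4),
    (1/(l2+l3) - 1/(l3+l4)) * (p 0 * p 5) + (1/(l1+l4) - 1/(l1+l2)) * (p 2 * p 3),
    (1/(l2+l4) - 1/(l2+l3)) * (p 0 * p 4) + (1/(l1+l3) - 1/(l1+l4)) * (p 1 * p 3)]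

/-- The point of `s₊` (`ε = 1`) or `s₋` (`ε = -1`) with parameters `(a₁,a₂,a₃)`. -/
noncomputable def sPoint (l1 l2 l3 l4 ε a₁ a₂ a₃ : ℝ) : Fin 6 → ℝ :=
  ![a₁/(l1+l4), a₂/(l2+l4), a₃/(l3+l4),
    ε * a₁/(l2+l3), ε * a₂/(l1+l3), ε * a₃/(l1+l2)]

/-- The Casimir function `C₁` on `so(4) ≅ ℝ⁶`. -/
noncomputable def C1fn (p : Fin 6 → ℝ) : ℝ :=
  (1/2) * (p 0^2 + p 1^2 + p 2^2 + p 3^2 + p 4^2 + p 5^2)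

/-- The Casimir function `C₂` on `so(4) ≅ ℝ⁶`. -/
noncomputable def C2fn (p : Fin 6 → ℝ) : ℝ :=
  p 0 * p 3 + p 1 * p 4 + p 2 * p 5

/-- Mishchenko's additional first integral `I` of the SO(4) free rigid body. -/
noncomputable def Ifn (l1 l2 l3 l4 : ℝ) (p : Fin 6 → ℝ) : ℝ :=
  (l2^2+l3^2) * p 0^2 + (l1^2+l3^2) * p 1^2 + (l1^2+l2^2) * p 2^2 +
    (l1^2+l4^2) * p 3^2 + (l2^2+l4^2) * p 4^2 + (l3^2+l4^2) * p 5^2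

/-- Every component of `F` has this shape; the common factor `b - a = c - d` is a difference of
two of the `λᵢ`, and cancels. -/
lemma cancel_inv_sub {a b c d P Q : ℝ} (ha : 0 < a) (hb : 0 < b) (hc : 0 < c) (hd : 0 < d)
    (hab : b - a ≠ 0) (h : b - a = c - d)
    (H : (1/a - 1/b) * P + (1/c - 1/d) * Q = 0) :
    P * a⁻¹ * b⁻¹ = Q * c⁻¹ * d⁻¹ := by
  have e1 : 1/a - 1/b = (b - a) * (a⁻¹ * b⁻¹) := by field_simp
  have e2 : 1/c - 1/d = -(b - a) * (c⁻¹ * d⁻¹) := by rw [h]; field_simp; ring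
  rw [e1, e2] at H
  apply mul_left_cancel₀ hab
  linear_combination H

/-- For `u`, `v` orthogonal for a positive diagonal form, and satisfying the two relations of
`u ∥ v` that involve the first index: multiplying orthogonality by `u₁v₁` gives a
vanishing sum of squares. The other indices follow by permuting the coordinates. -/
lemma mul_eq_zero_of_weighted {c₁ c₂ c₃ u₁ u₂ u₃ v₁ v₂ v₃ : ℝ}
    (h1 : 0 < c₁) (h2 : 0 < c₂) (h3 : 0 < c₃)
    (h12 : u₁ * v₂ = u₂ * v₁) (h13 : u₁ * v₃ = u₃ * v₁)
    (hC : c₁ * (u₁ * v₁) + c₂ * (u₂ * v₂) + c₃ * (u₃ * v₃) = 0) :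
    u₁ * v₁ = 0 ∧ u₂ * v₁ = 0 ∧ u₃ * v₁ = 0 := by
  have key : c₁ * (u₁ * v₁)^2 + c₂ * (u₂ * v₁)^2 + c₃ * (u₃ * v₁)^2 = 0 := by
    linear_combination u₁ * v₁ * hC - c₂ * u₂ * v₁ * h12 - c₃ * u₃ * v₁ * h13
  have p1 := mul_nonneg h1.le (sq_nonneg (u₁ * v₁))
  have p2 := mul_nonneg h2.le (sq_nonneg (u₂ * v₁))
  have p3 := mul_nonneg h3.le (sq_nonneg (u₃ * v₁))
  have z {c t : ℝ} (hc : 0 < c) (h : c * t ^ 2 = 0) : t = 0 := by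
    simpa [hc.ne'] using h
  exact ⟨z h1 (by linarith), z h2 (by linarith), z h3 (by linarith)⟩

/-- a nonzero equilibrium of the SO(4) free rigid body with
`C₂ = 0` lies in `t₁ ∪ t₂ ∪ t₃`: all coordinates vanish except possibly one
pair `(xᵢ, yᵢ)`. -/
theorem stmt8 (l1 l2 l3 l4 : ℝ)
    (hd12 : l1 ≠ l2) (hd13 : l1 ≠ l3) (hd14 : l1 ≠ l4)
    (hd23 : l2 ≠ l3) (hd24 : l2 ≠ l4) (hd34 : l3 ≠ l4)
    (hp12 : 0 < l1 + l2) (hp13 : 0 < l1 + l3) (hp14 : 0 < l1 + l4)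
    (hp23 : 0 < l2 + l3) (hp24 : 0 < l2 + l4) (hp34 : 0 < l3 + l4)
    (p : Fin 6 → ℝ) (hp0 : p ≠ 0)
    (heq : rbF l1 l2 l3 l4 p = 0) (hC2 : C2fn p = 0) :
    (p 1 = 0 ∧ p 2 = 0 ∧ p 4 = 0 ∧ p 5 = 0) ∨
    (p 0 = 0 ∧ p 2 = 0 ∧ p 3 = 0 ∧ p 5 = 0) ∨
    (p 0 = 0 ∧ p 1 = 0 ∧ p 3 = 0 ∧ p 4 = 0) := by
  have F0 := congrFun heq 0
  have F1 := congrFun heq 1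
  have F2 := congrFun heq 2
  have F3 := congrFun heq 3
  have F4 := congrFun heq 4
  have F5 := congrFun heq 5
  simp only [rbF, Pi.zero_apply, Matrix.cons_val] at F0 F1 F2 F3 F4 F5
  have G0 := cancel_inv_sub hp12 hp13 hp34 hp24 (by grind) (by ring) F0
  have G1 := cancel_inv_sub hp23 hp12 hp14 hp34 (by grind) (by ring) F1
  have G2 := cancel_inv_sub hp13 hp23 hp24 hp14 (by grind) (by ring) F2
  have G3 := cancel_inv_sub hp34 hp13 hp12 hp24 (by grind) (by ring) F3
  have G4 := cancel_inv_sub hp23 hp34 hp14 hp12 (by grind) (by ring) F4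
  have G5 := cancel_inv_sub hp24 hp23 hp13 hp14 (by grind) (by ring) F5
  obtain ⟨u₁, hu₁⟩ : ∃ u, u = p 0 * (l2+l3)⁻¹ := ⟨_, rfl⟩
  obtain ⟨u₂, hu₂⟩ : ∃ u, u = p 1 * (l1+l3)⁻¹ := ⟨_, rfl⟩
  obtain ⟨u₃, hu₃⟩ : ∃ u, u = p 2 * (l1+l2)⁻¹ := ⟨_, rfl⟩
  obtain ⟨v₁, hv₁⟩ : ∃ u, u = p 3 * (l1+l4)⁻¹ := ⟨_, rfl⟩
  obtain ⟨v₂, hv₂⟩ : ∃ u, u = p 4 * (l2+l4)⁻¹ := ⟨_, rfl⟩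
  obtain ⟨v₃, hv₃⟩ : ∃ u, u = p 5 * (l3+l4)⁻¹ := ⟨_, rfl⟩
  have H23 : u₂ * u₃ = v₂ * v₃ := by subst_vars; linear_combination G0
  have H13 : u₁ * u₃ = v₁ * v₃ := by subst_vars; linear_combination G1
  have H12 : u₁ * u₂ = v₁ * v₂ := by subst_vars; linear_combination G2
  have K23 : u₂ * v₃ = u₃ * v₂ := by subst_vars; linear_combination G3
  have K13 : u₁ * v₃ = u₃ * v₁ := by subst_vars; linear_combination G4
  have K12 : u₁ * v₂ = u₂ * v₁ := by subst_vars; linear_combination G5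
  have x1 : p 0 = u₁ * (l2+l3) := by rw [hu₁]; field_simp
  have x2 : p 1 = u₂ * (l1+l3) := by rw [hu₂]; field_simp
  have x3 : p 2 = u₃ * (l1+l2) := by rw [hu₃]; field_simp
  have y1 : p 3 = v₁ * (l1+l4) := by rw [hv₁]; field_simp
  have y2 : p 4 = v₂ * (l2+l4) := by rw [hv₂]; field_simp
  have y3 : p 5 = v₃ * (l3+l4) := by rw [hv₃]; field_simp
  have hC : ((l2+l3)*(l1+l4)) * (u₁ * v₁) + ((l1+l3)*(l2+l4)) * (u₂ * v₂)
      + ((l1+l2)*(l3+l4)) * (u₃ * v₃) = 0 := by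
    rw [C2fn, x1, x2, x3, y1, y2, y3] at hC2
    linear_combination hC2
  have c1 := mul_pos hp23 hp14
  have c2 := mul_pos hp13 hp24
  have c3 := mul_pos hp12 hp34
  obtain ⟨a11, a21, a31⟩ := mul_eq_zero_of_weighted c1 c2 c3 K12 K13 hC
  obtain ⟨a22, a12, a32⟩ := mul_eq_zero_of_weighted c2 c1 c3 K12.symm K23
    (by linear_combination hC)
  obtain ⟨a33, a13, a23⟩ := mul_eq_zero_of_weighted c3 c1 c2 K13.symm K23.symm
    (by linear_combination hC)
  have b23 : u₂ * u₃ = 0 := by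
    have : (u₂ * u₃)^2 = 0 := by linear_combination u₂ * u₃ * H23 + u₃ * v₃ * a22
    simpa only [sq_eq_zero_iff] using this
  have b13 : u₁ * u₃ = 0 := by
    have : (u₁ * u₃)^2 = 0 := by linear_combination u₁ * u₃ * H13 + u₃ * v₃ * a11
    simpa only [sq_eq_zero_iff] using this
  have b12 : u₁ * u₂ = 0 := by
    have : (u₁ * u₂)^2 = 0 := by linear_combination u₁ * u₂ * H12 + u₂ * v₂ * a11
    simpa only [sq_eq_zero_iff] using this
  rw [b23] at H23
  rw [b13] at H13
  rw [b12] at H12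
  rw [x1, x2, x3, y1, y2, y3]
  simp only [mul_eq_zero, hp12.ne', hp13.ne', hp14.ne', hp23.ne', hp24.ne', hp34.ne', or_false,
    zero_eq_mul] at *
  clear * - a11 a21 a31 a22 a12 a32 a33 a13 a23 H12 H13 H23 b12 b13 b23
  grind
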